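/- arXiv:2304.00911 — 2 statements merged into one kernel-verified Lean document; each statement's English description precedes it below -/
import Mathlib

section
/- Let M be a para-Sasaki-like Riemannian manifold with generalized symmetric metric connection ∇̄. Then for all vector fields x,y: (∇̄_x φ)y = (β−1){g(φx,φy)ξ + η(y)φ²x} + α{g(x,φy)ξ + η(y)φx}, ∇̄_x ξ = (1−β)φx − αφ²x, and (∇̄_x η)y = (1−β)g(φx,y) − α g(x,y) + α η(x)η(y). -/
/-- Abstract algebraic model of an almost paracontact almost paracomplex
Riemannian (apapR) manifold of dimension `2 n + 1`.  Here `R` plays the role of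
the commutative ring of smooth functions `C^∞(M)` and `V` the `R`-module of
vector fields.  `act x f` is the derivative `x(f)` of a function along a vector
field, `bracket` is the Lie bracket, `g` the Riemannian metric, `(phi, xi, eta)`
the almost paracontact almost paracomplex structure, `nab` the Levi-Civita
connection of `g` and `e` a (local) orthonormal frame with `e 0 = xi`. -/
structure ApapR (R V : Type*) [CommRing R] [Algebra ℝ R]
    [AddCommGroup V] [Module R V] where
  n : ℕ
  act : V → R → R
  bracket : V → V → V
  g : V → V → R
  phi : V → V
  xi : V
  eta : V → R
  nab : V → V → V
  e : Fin (2 * n + 1) → V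
  act_addl : ∀ x y f, act (x + y) f = act x f + act y f
  act_smull : ∀ (h : R) (x : V) f, act (h • x) f = h * act x f
  act_addr : ∀ x f h, act x (f + h) = act x f + act x h
  act_mul : ∀ x f h, act x (f * h) = f * act x h + h * act x f
  g_symm : ∀ x y, g x y = g y x
  g_addl : ∀ x y z, g (x + y) z = g x z + g y z
  g_smull : ∀ (f : R) x y, g (f • x) y = f * g x y
  phi_add : ∀ x y, phi (x + y) = phi x + phi y
  phi_smul : ∀ (f : R) x, phi (f • x) = f • phi x
  eta_eq : ∀ x, eta x = g x xi
  -- apapR structure axioms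
  eta_xi : eta xi = 1
  phi_phi : ∀ x, phi (phi x) = x - eta x • xi
  phi_xi : phi xi = 0
  g_phi_phi : ∀ x y, g (phi x) (phi y) = g x y - eta x * eta y
  -- orthonormal frame, `tr φ = 0`
  e_zero : e 0 = xi
  e_orthonormal : ∀ i j, g (e i) (e j) = if i = j then 1 else 0
  trace_phi : (∑ i, g (phi (e i)) (e i)) = 0
  -- Levi-Civita connection axioms
  nab_addl : ∀ x y z, nab (x + y) z = nab x z + nab y z
  nab_smull : ∀ (f : R) x y, nab (f • x) y = f • nab x y
  nab_addr : ∀ x y z, nab x (y + z) = nab x y + nab x z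
  nab_leibniz : ∀ x (f : R) y, nab x (f • y) = f • nab x y + act x f • y
  nab_metric : ∀ x y z, act x (g y z) = g (nab x y) z + g y (nab x z)
  nab_torsion : ∀ x y, nab x y - nab y x = bracket x y

namespace ApapR

variable {R V : Type*} [CommRing R] [Algebra ℝ R] [AddCommGroup V] [Module R V]

/-- The para-Sasaki-like condition `(∇_x φ)y = −g(x,y)ξ − η(y)x + 2η(x)η(y)ξ`. -/
def IsParaSasakiLike (S : ApapR R V) : Prop :=
  ∀ x y, S.nab x (S.phi y) - S.phi (S.nab x y)
    = -(S.g x y • S.xi) - S.eta y • x + (2 * S.eta x * S.eta y) • S.xi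

/-- The generalized symmetric metric connection
`∇̄_x y = ∇_x y + α{g(x,y)ξ − η(y)x} + β{g(φx,y)ξ − η(y)φx}`. -/
def gsmc (S : ApapR R V) (α β : R) (x y : V) : V :=
  S.nab x y + (α * S.g x y) • S.xi - (α * S.eta y) • x
    + (β * S.g (S.phi x) y) • S.xi - (β * S.eta y) • S.phi x

/-- Curvature tensor of a connection `D`:
`R_D(x,y)z = D_x D_y z − D_y D_x z − D_[x,y] z`. -/
def curv (S : ApapR R V) (D : V → V → V) (x y z : V) : V :=
  D x (D y z) - D y (D x z) - D (S.bracket x y) z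

/-- Ricci tensor of a connection `D` with respect to the orthonormal frame. -/
def ric (S : ApapR R V) (D : V → V → V) (x y : V) : R :=
  ∑ i, S.g (S.curv D (S.e i) x y) (S.e i)

/-- Scalar curvature of a connection `D`. -/
def scal (S : ApapR R V) (D : V → V → V) : R :=
  ∑ i, S.ric D (S.e i) (S.e i)

/-- Divergence of a vector field with respect to a connection `D`. -/
def divg (S : ApapR R V) (D : V → V → V) (x : V) : R :=
  ∑ i, S.g (D (S.e i) x) (S.e i)

/-- The associated metric `g̃(x,y) = g(x,φy) + η(x)η(y)`. -/
def tg (S : ApapR R V) (x y : V) : R := S.g x (S.phi y) + S.eta x * S.eta y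

/-- A function is constant iff all its derivatives vanish. -/
def IsConstant (S : ApapR R V) (f : R) : Prop := ∀ x, S.act x f = 0

end ApapR

namespace ApapR

variable {R V : Type*} [CommRing R] [Algebra ℝ R] [AddCommGroup V] [Module R V]

/-!
The correction `∇̄ - ∇` is an explicit tensor, skew-adjoint for `g`, so `∇̄φ` and `∇̄ξ` follow from
`∇φ` and `∇ξ` by algebra, and `∇̄g = 0` gives `(∇̄_x η) y = g (∇̄_x ξ) y`.
It remains to find `∇ξ`. Evaluating the para-Sasaki-like condition at `y = ξ` yields
`φ (∇_x ξ) = φ² x`; since `g ξ ξ = 1` is constant, `∇_x ξ` lies in `ker η`, where `φ² = id`,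
and therefore `∇_x ξ = φ³ x = φ x`.
-/

section Structure

variable (S : ApapR R V)

theorem phi_sub (x y : V) : S.phi (x - y) = S.phi x - S.phi y :=
  map_sub (AddMonoidHom.mk' S.phi S.phi_add) x y

theorem g_sub_left (x y z : V) : S.g (x - y) z = S.g x z - S.g y z :=
  map_sub (AddMonoidHom.mk' (S.g · z) (S.g_addl · · z)) x y

theorem eta_smul (f : R) (x : V) : S.eta (f • x) = f * S.eta x := by
  simp only [S.eta_eq, S.g_smull]

theorem phi_phi_phi (x : V) : S.phi (S.phi (S.phi x)) = S.phi x := by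
  rw [S.phi_phi x, S.phi_sub, S.phi_smul, S.phi_xi, smul_zero, sub_zero]

theorem eta_phi (x : V) : S.eta (S.phi x) = 0 := by
  have eta_smul_xi : S.eta (S.phi x) • S.xi = 0 :=
    sub_eq_self.mp ((S.phi_phi (S.phi x)).symm.trans (S.phi_phi_phi x))
  calc S.eta (S.phi x) = S.eta (S.eta (S.phi x) • S.xi) := by rw [S.eta_smul, S.eta_xi, mul_one]
    _ = S.eta ((0 : R) • S.xi) := by rw [eta_smul_xi, zero_smul]
    _ = 0 := by rw [S.eta_smul, zero_mul]

theorem g_phi_phi_left (x y : V) :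
    S.g (S.phi (S.phi x)) y = S.g x y - S.eta x * S.eta y := by
  rw [S.phi_phi, S.g_sub_left, S.g_smull, S.g_symm S.xi, ← S.eta_eq]

end Structure

section LeviCivita

variable (S : ApapR R V)

theorem act_one (x : V) : S.act x 1 = 0 := by
  simpa only [one_mul, left_eq_add] using S.act_mul x 1 1

theorem nab_zero (x : V) : S.nab x 0 = 0 :=
  map_zero (AddMonoidHom.mk' (S.nab x) (S.nab_addr x))

theorem eta_nab_xi (x : V) : S.eta (S.nab x S.xi) = 0 := by
  have two_smul_eta : (2 : ℝ) • S.eta (S.nab x S.xi) = 0 := by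
    calc (2 : ℝ) • S.eta (S.nab x S.xi)
        = S.g (S.nab x S.xi) S.xi + S.g S.xi (S.nab x S.xi) := by
          rw [two_smul, S.g_symm S.xi, S.eta_eq]
      _ = S.act x (S.g S.xi S.xi) := (S.nab_metric x S.xi S.xi).symm
      _ = 0 := by rw [← S.eta_eq, S.eta_xi, S.act_one]
  exact (smul_eq_zero_iff_right two_ne_zero).mp two_smul_eta

variable {S}

theorem IsParaSasakiLike.phi_nab_xi (hS : S.IsParaSasakiLike) (x : V) :
    S.phi (S.nab x S.xi) = S.phi (S.phi x) := by
  have nab_phi_xi := hS x S.xi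
  rw [S.phi_xi, S.nab_zero, S.eta_xi, ← S.eta_eq, zero_sub, neg_eq_iff_eq_neg] at nab_phi_xi
  rw [nab_phi_xi, S.phi_phi]
  module

theorem IsParaSasakiLike.nab_xi (hS : S.IsParaSasakiLike) (x : V) :
    S.nab x S.xi = S.phi x := by
  calc S.nab x S.xi = S.phi (S.phi (S.nab x S.xi)) := by
        rw [S.phi_phi, S.eta_nab_xi, zero_smul, sub_zero]
    _ = S.phi (S.phi (S.phi x)) := by rw [hS.phi_nab_xi]
    _ = S.phi x := S.phi_phi_phi x

end LeviCivita

section GeneralizedSymmetricMetricConnection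

variable (S : ApapR R V) (α β : R)

theorem gsmc_phi_sub_phi_gsmc (x y : V) :
    S.gsmc α β x (S.phi y) - S.phi (S.gsmc α β x y)
      = S.nab x (S.phi y) - S.phi (S.nab x y)
        + α • (S.g x (S.phi y) • S.xi + S.eta y • S.phi x)
        + β • (S.g (S.phi x) (S.phi y) • S.xi + S.eta y • S.phi (S.phi x)) := by
  simp only [gsmc, S.phi_add, S.phi_sub, S.phi_smul, S.phi_xi, S.eta_phi]
  module

theorem gsmc_xi (x : V) :
    S.gsmc α β x S.xi = S.nab x S.xi - α • S.phi (S.phi x) - β • S.phi x := by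
  simp only [gsmc, ← S.eta_eq, S.eta_phi, S.eta_xi, S.phi_phi]
  module

theorem g_gsmc (x y z : V) :
    S.g (S.gsmc α β x y) z
      = S.g (S.nab x y) z + α * (S.g x y * S.eta z - S.eta y * S.g x z)
        + β * (S.g (S.phi x) y * S.eta z - S.eta y * S.g (S.phi x) z) := by
  simp only [gsmc, S.g_addl, S.g_sub_left, S.g_smull, S.g_symm S.xi z, ← S.eta_eq]
  ring

theorem gsmc_metric (x y z : V) :
    S.act x (S.g y z) = S.g (S.gsmc α β x y) z + S.g y (S.gsmc α β x z) := by
  rw [S.nab_metric, S.g_symm y (S.nab x z), S.g_symm y (S.gsmc α β x z), S.g_gsmc, S.g_gsmc]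
  ring

theorem act_eta_sub_eta_gsmc (x y : V) :
    S.act x (S.eta y) - S.eta (S.gsmc α β x y) = S.g (S.gsmc α β x S.xi) y := by
  rw [S.eta_eq, S.eta_eq, S.gsmc_metric α β, add_sub_cancel_left, S.g_symm]

variable {S}

theorem IsParaSasakiLike.gsmc_phi_sub_phi_gsmc (hS : S.IsParaSasakiLike) (x y : V) :
    S.gsmc α β x (S.phi y) - S.phi (S.gsmc α β x y)
      = ((β - 1) * S.g (S.phi x) (S.phi y)) • S.xi
        + ((β - 1) * S.eta y) • S.phi (S.phi x)
        + (α * S.g x (S.phi y)) • S.xi + (α * S.eta y) • S.phi x := by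
  rw [S.gsmc_phi_sub_phi_gsmc, hS x y, S.g_phi_phi, S.phi_phi]
  module

theorem IsParaSasakiLike.gsmc_xi (hS : S.IsParaSasakiLike) (x : V) :
    S.gsmc α β x S.xi = (1 - β) • S.phi x - α • S.phi (S.phi x) := by
  rw [S.gsmc_xi, hS.nab_xi]
  module

theorem IsParaSasakiLike.act_eta_sub_eta_gsmc (hS : S.IsParaSasakiLike) (x y : V) :
    S.act x (S.eta y) - S.eta (S.gsmc α β x y)
      = (1 - β) * S.g (S.phi x) y - α * S.g x y + α * S.eta x * S.eta y := by
  rw [S.act_eta_sub_eta_gsmc, hS.gsmc_xi, S.g_sub_left, S.g_smull, S.g_smull, S.g_phi_phi_left]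
  ring

end GeneralizedSymmetricMetricConnection

/-- basic formulas for `∇̄φ`, `∇̄ξ` and `∇̄η` on a para-Sasaki-like
manifold with the generalized symmetric metric connection. -/
theorem gsmc_phi_xi_eta (S : ApapR R V) (hS : S.IsParaSasakiLike) (α β : R) :
    (∀ x y, S.gsmc α β x (S.phi y) - S.phi (S.gsmc α β x y)
        = ((β - 1) * S.g (S.phi x) (S.phi y)) • S.xi
            + ((β - 1) * S.eta y) • S.phi (S.phi x)
            + (α * S.g x (S.phi y)) • S.xi + (α * S.eta y) • S.phi x) ∧
    (∀ x, S.gsmc α β x S.xi = (1 - β) • S.phi x - α • S.phi (S.phi x)) ∧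
    (∀ x y, S.act x (S.eta y) - S.eta (S.gsmc α β x y)
        = (1 - β) * S.g (S.phi x) y - α * S.g x y + α * S.eta x * S.eta y) := by
  exact ⟨hS.gsmc_phi_sub_phi_gsmc α β, hS.gsmc_xi α β, hS.act_eta_sub_eta_gsmc α β⟩

end ApapR
end

section
/- Let (M,g,φ,ξ,η) be a (2n+1)-dimensional para-Sasaki-like Riemannian manifold with generalized symmetric metric connection ∇̄ (with smooth functions α, β). Then the curvature tensors R̄ of ∇̄ and R of the Levi-Civita connection ∇ satisfy: R̄(x,y)z = R(x,y)z + x(α)g(y,z)ξ + (α−αβ)g(y,z)φx − x(α)η(z)y + x(β)g(φy,z)ξ + (2β−β²)g(φy,z)φx − x(β)η(z)φy + (α²+β)g(y,z)η(x)ξ + αβ g(φy,z)η(x)ξ − α²g(y,z)x + (α²+β)η(y)η(z)x + (α−αβ)g(φy,z)x + αβ η(y)η(z)φx − y(α)g(x,z)ξ + y(α)η(z)x − y(β)g(φx,z)ξ + (β²−2β)g(φx,z)φy + y(β)η(z)φx − (α²+β)η(y)g(x,z)ξ − αβ g(φx,z)η(y)ξ + α² g(x,z)y − (α²+β)η(x)η(z)y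 + (αβ−α)g(φx,z)y − αβ η(x)η(z)φy + (αβ−α)g(x,z)φy. -/
namespace ApapR

variable {R V : Type*} [CommRing R] [Algebra ℝ R] [AddCommGroup V] [Module R V]

/-! The generalized symmetric metric connection is `∇̄_x = ∇_x + Tx ∧ ξ`, where `T = α + βφ` and
`u ∧ v` is the skew endomorphism `w ↦ g(u,w)v − g(v,w)u`. The structure equation
`R̄(x,y) = R(x,y) + d^∇A(x,y) + [A_x, A_y]` for the endomorphism-valued 1-form `A_x = Tx ∧ ξ`,
combined with the derivation rules of `∇_x` and of `u ∧ v` on wedges, gives for a unit field `ξ`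
`R̄(x,y) = R(x,y) + (d^∇T(x,y) + η(Tx)Ty − η(Ty)Tx) ∧ ξ + Ty ∧ ∇_xξ − Tx ∧ ∇_yξ + Tx ∧ Ty`.
The para-Sasaki-like condition supplies `∇_xξ = φx` and `d^∇φ(x,y) = η(x)y − η(y)x`. -/

section Wedge

variable {K E : Type*} [CommRing K] [AddCommGroup E] [Module K E]

/-- The endomorphism `u ∧ v : w ↦ B(u,w)v − B(v,w)u`, bilinear in `u` and `v`; it is
skew-adjoint when the form `B` is symmetric. -/
def wedge (B : LinearMap.BilinForm K E) : E →ₗ[K] E →ₗ[K] Module.End K E :=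
  LinearMap.smulRightₗ ∘ₗ B - (LinearMap.smulRightₗ ∘ₗ B).flip

variable (B : LinearMap.BilinForm K E)

theorem wedge_apply (u v w : E) : wedge B u v w = B u w • v - B v w • u := rfl

theorem wedge_self (u : E) : wedge B u u = 0 := sub_self _

theorem wedge_swap (u v : E) : wedge B v u = -wedge B u v := (neg_sub _ _).symm

variable {B}

theorem lie_wedge_wedge (hB : B.IsSymm) (u v a b : E) :
    ⁅wedge B u v, wedge B a b⁆ = wedge B (wedge B u v a) b + wedge B a (wedge B u v b) := by
  ext w
  simp only [Ring.lie_def, LinearMap.sub_apply, LinearMap.add_apply, Module.End.mul_apply,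
    wedge_apply, map_sub, map_smul, LinearMap.smul_apply, hB.eq a, hB.eq b]
  module

theorem lie_wedge_wedge_of_unit (hB : B.IsSymm) {v : E} (hv : B v v = 1) (u a : E) :
    ⁅wedge B u v, wedge B a v⁆ = wedge B (B u v • a - B a v • u) v + wedge B u a := by
  have wedge_a : wedge B u v a = B u a • v - B a v • u := by rw [wedge_apply, hB.eq a v]
  have wedge_v : wedge B u v v = B u v • v - u := by rw [wedge_apply, hv, one_smul]
  rw [lie_wedge_wedge hB, wedge_a, wedge_v, wedge_swap B a u]
  simp only [map_sub, map_smul, LinearMap.sub_apply, LinearMap.smul_apply, wedge_self]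
  module

end Wedge

variable (S : ApapR R V)

/-- The metric `g` as a bundled `R`-bilinear form. -/
def metric : LinearMap.BilinForm R V :=
  LinearMap.mk₂ R S.g S.g_addl S.g_smull
    (fun x y z => by rw [S.g_symm, S.g_addl, S.g_symm y, S.g_symm z])
    (fun f x y => by rw [S.g_symm, S.g_smull, S.g_symm y, smul_eq_mul])

theorem metric_apply (x y : V) : S.metric x y = S.g x y := rfl

theorem metric_isSymm : S.metric.IsSymm := ⟨S.g_symm⟩

theorem metric_xi_right (x : V) : S.metric x S.xi = S.eta x := (S.eta_eq x).symm

theorem metric_xi_left (x : V) : S.metric S.xi x = S.eta x :=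
  (S.g_symm S.xi x).trans (S.metric_xi_right x)

theorem eta_add (x y : V) : S.eta (x + y) = S.eta x + S.eta y := by
  simp only [S.eta_eq, S.g_addl]

theorem eq_zero_of_smul_xi_eq_zero {f : R} (h : f • S.xi = 0) : f = 0 := by
  rw [← mul_one f, ← S.eta_xi, ← S.eta_smul, h, ← zero_smul R S.xi, S.eta_smul, zero_mul]

/-- The covariant derivative `∇_x` as an additive map; it is not `R`-linear. -/
def nabHom (x : V) : V →+ V := AddMonoidHom.mk' (S.nab x) (S.nab_addr x)

theorem nab_sub (x y z : V) : S.nab x (y - z) = S.nab x y - S.nab x z := map_sub (S.nabHom x) y z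

theorem nab_wedge (x u v w : V) :
    S.nab x (wedge S.metric u v w) = wedge S.metric (S.nab x u) v w
      + wedge S.metric u (S.nab x v) w + wedge S.metric u v (S.nab x w) := by
  simp only [wedge_apply, metric_apply, nab_sub, S.nab_leibniz, S.nab_metric]
  module

/-- The exterior covariant derivative
`d^∇T(x,y) = ∇_x(Ty) − ∇_y(Tx) − T[x,y]` of a vector-valued 1-form `T`. -/
def extCovDeriv (T : V → V) (x y : V) : V :=
  S.nab x (T y) - S.nab y (T x) - T (S.bracket x y)

/-- The exterior covariant derivative
`d^∇A(x,y) = [∇_x, A_y] − [∇_y, A_x] − A_[x,y]` of an endomorphism-valued 1-form `A`,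
evaluated at `z`. -/
def extCovDerivEnd (A : V → Module.End R V) (x y z : V) : V :=
  (S.nab x (A y z) - A y (S.nab x z)) - (S.nab y (A x z) - A x (S.nab y z)) - A (S.bracket x y) z

theorem curv_nab_add (A : V → Module.End R V) (x y z : V) :
    S.curv (fun u w => S.nab u w + A u w) x y z
      = S.curv S.nab x y z + S.extCovDerivEnd A x y z + ⁅A x, A y⁆ z := by
  simp only [curv, extCovDerivEnd, S.nab_addr, map_add, Ring.lie_def, LinearMap.sub_apply,
    Module.End.mul_apply]
  abel

theorem extCovDerivEnd_wedge (T : V → V) (v x y z : V) :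
    S.extCovDerivEnd (fun u => wedge S.metric (T u) v) x y z
      = wedge S.metric (S.extCovDeriv T x y) v z
        + wedge S.metric (T y) (S.nab x v) z - wedge S.metric (T x) (S.nab y v) z := by
  simp only [extCovDerivEnd, extCovDeriv, nab_wedge, map_sub, LinearMap.sub_apply]
  abel

theorem curv_nab_add_wedge {v : V} (hv : S.metric v v = 1) (T : V → V) (x y z : V) :
    S.curv (fun u w => S.nab u w + wedge S.metric (T u) v w) x y z
      = S.curv S.nab x y z
        + wedge S.metric (S.extCovDeriv T x y
            + (S.metric (T x) v • T y - S.metric (T y) v • T x)) v z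
        + wedge S.metric (T y) (S.nab x v) z - wedge S.metric (T x) (S.nab y v) z
        + wedge S.metric (T x) (T y) z := by
  rw [S.curv_nab_add (fun u => wedge S.metric (T u) v), extCovDerivEnd_wedge,
    lie_wedge_wedge_of_unit S.metric_isSymm hv, map_add]
  simp only [LinearMap.add_apply]
  abel

theorem extCovDeriv_id (x y : V) : S.extCovDeriv (fun u => u) x y = 0 :=
  sub_eq_zero.mpr (S.nab_torsion x y)

theorem extCovDeriv_add (T U : V → V) (x y : V) :
    S.extCovDeriv (fun u => T u + U u) x y = S.extCovDeriv T x y + S.extCovDeriv U x y := by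
  simp only [extCovDeriv, S.nab_addr]
  abel

theorem extCovDeriv_smul (f : R) (T : V → V) (x y : V) :
    S.extCovDeriv (fun u => f • T u) x y
      = S.act x f • T y - S.act y f • T x + f • S.extCovDeriv T x y := by
  simp only [extCovDeriv, S.nab_leibniz]
  module

theorem gsmc_eq_nab_add_wedge (α β : R) :
    S.gsmc α β = fun u w => S.nab u w + wedge S.metric (α • u + β • S.phi u) S.xi w := by
  funext u w
  simp only [gsmc, wedge_apply, metric_xi_left, ← metric_apply, map_add, map_smul,
    LinearMap.add_apply, LinearMap.smul_apply]
  module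

variable {S}

namespace IsParaSasakiLike

theorem nab_xi_s2 (hS : S.IsParaSasakiLike) (x : V) : S.nab x S.xi = S.phi x := by
  have phi_nab_xi : S.phi (S.nab x S.xi) = S.phi (S.phi x) := by
    have h := hS x S.xi
    rw [S.phi_xi, nab_zero, S.eta_xi, ← S.eta_eq] at h
    rw [S.phi_phi]
    linear_combination (norm := module) -h
  calc S.nab x S.xi = S.phi (S.phi (S.nab x S.xi)) := by
        rw [S.phi_phi, eta_nab_xi, zero_smul, sub_zero]
    _ = S.phi x := by rw [phi_nab_xi, phi_phi_phi]

theorem extCovDeriv_phi (hS : S.IsParaSasakiLike) (x y : V) :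
    S.extCovDeriv S.phi x y = S.eta x • y - S.eta y • x := by
  have phi_torsion : S.phi (S.nab x y) = S.phi (S.nab y x) + S.phi (S.bracket x y) := by
    rw [← S.phi_add, ← S.nab_torsion, add_sub_cancel]
  have nab_phi_swap := hS y x
  rw [S.g_symm y x] at nab_phi_swap
  unfold extCovDeriv
  linear_combination (norm := module) hS x y - nab_phi_swap + phi_torsion

theorem curv_gsmc_eq_wedge (hS : S.IsParaSasakiLike) (α β : R) (x y z : V) :
    S.curv (S.gsmc α β) x y z
      = S.curv S.nab x y z
        + wedge S.metric (S.act x α • y - S.act y α • x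
            + (S.act x β • S.phi y - S.act y β • S.phi x)
            + (α ^ 2 + β) • (S.eta x • y - S.eta y • x)
            + (α * β) • (S.eta x • S.phi y - S.eta y • S.phi x)) S.xi z
        + α ^ 2 • wedge S.metric x y z
        + (α * β - α) • (wedge S.metric x (S.phi y) z + wedge S.metric (S.phi x) y z)
        + (β ^ 2 - 2 * β) • wedge S.metric (S.phi x) (S.phi y) z := by
  have xi_unit : S.metric S.xi S.xi = 1 := (S.metric_xi_right S.xi).trans S.eta_xi
  have eta_T (u : V) : S.metric (α • u + β • S.phi u) S.xi = α * S.eta u := by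
    rw [metric_xi_right, eta_add, eta_smul, eta_smul, eta_phi, mul_zero, add_zero]
  rw [gsmc_eq_nab_add_wedge, S.curv_nab_add_wedge xi_unit (fun u => α • u + β • S.phi u),
    extCovDeriv_add, extCovDeriv_smul, extCovDeriv_smul, extCovDeriv_id, smul_zero, add_zero,
    hS.extCovDeriv_phi, hS.nab_xi_s2, hS.nab_xi_s2, eta_T, eta_T]
  simp only [map_add, map_sub, map_smul, LinearMap.add_apply, LinearMap.sub_apply,
    LinearMap.smul_apply, wedge_swap S.metric (S.phi x), LinearMap.neg_apply]
  module

end IsParaSasakiLike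

/-- the relation between the curvature tensor of the generalized
symmetric metric connection and that of the Levi-Civita connection on a
para-Sasaki-like manifold, for smooth functions `α`, `β`. -/
theorem curv_gsmc_eq (S : ApapR R V) (hS : S.IsParaSasakiLike) (α β : R)
    (x y z : V) :
    S.curv (S.gsmc α β) x y z
      = S.curv S.nab x y z
        + (S.act x α * S.g y z) • S.xi
        + ((α - α * β) * S.g y z) • S.phi x
        - (S.act x α * S.eta z) • y
        + (S.act x β * S.g (S.phi y) z) • S.xi
        + ((2 * β - β ^ 2) * S.g (S.phi y) z) • S.phi x
        - (S.act x β * S.eta z) • S.phi y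
        + ((α ^ 2 + β) * S.g y z * S.eta x) • S.xi
        + (α * β * S.g (S.phi y) z * S.eta x) • S.xi
        - (α ^ 2 * S.g y z) • x
        + ((α ^ 2 + β) * S.eta y * S.eta z) • x
        + ((α - α * β) * S.g (S.phi y) z) • x
        + (α * β * S.eta y * S.eta z) • S.phi x
        - (S.act y α * S.g x z) • S.xi
        + (S.act y α * S.eta z) • x
        - (S.act y β * S.g (S.phi x) z) • S.xi
        + ((β ^ 2 - 2 * β) * S.g (S.phi x) z) • S.phi y
        + (S.act y β * S.eta z) • S.phi x
        - ((α ^ 2 + β) * S.eta y * S.g x z) • S.xi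
        - (α * β * S.g (S.phi x) z * S.eta y) • S.xi
        + (α ^ 2 * S.g x z) • y
        - ((α ^ 2 + β) * S.eta x * S.eta z) • y
        + ((α * β - α) * S.g (S.phi x) z) • y
        - (α * β * S.eta x * S.eta z) • S.phi y
        + ((α * β - α) * S.g x z) • S.phi y := by
  rw [hS.curv_gsmc_eq_wedge]
  simp only [wedge_apply, metric_xi_left, ← metric_apply, map_add, map_sub, map_smul,
    LinearMap.add_apply, LinearMap.sub_apply, LinearMap.smul_apply]
  module

end ApapR
end
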